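/- Let p ≥ 1 be a real number, let α ∈ (1/2, 1], let q ∈ ℝ^d and r ≥ 0, and suppose ∑_{i : ‖a_i − q‖_p ≤ r} w_i ≥ αW. If x ∈ ℝ^d is any coordinatewise weighted median of the points, then |x_j − q_j| ≤ r for every coordinate j, and hence ‖x − q‖_p ≤ d^{1/p} · r. -/

import Mathlib

/-!
The points in the ball carry more than half of the total weight, while the half-lines `(-∞, x_j]`
and `[x_j, ∞)` each catch at least half of it in coordinate `j`. Nonnegative weights then force the
ball to contain a point on either side of `x_j`. Since the `ℓ_p` norm dominates each coordinate, the
`j`-th coordinates of these two points lie in the interval `[q_j - r, q_j + r]`, and `x_j` is caught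
between them.
-/

open Finset

/-- The ℓ_p norm of a vector in ℝ^d, for a real exponent p. -/
noncomputable def lpNorm {d : ℕ} (p : ℝ) (x : Fin d → ℝ) : ℝ :=
  (∑ j, |x j| ^ p) ^ (1 / p)

section lpNorm

variable {d : ℕ} {p r : ℝ} {y : Fin d → ℝ}

lemma abs_apply_le_lpNorm (hp : 0 < p) (y : Fin d → ℝ) (j : Fin d) : |y j| ≤ lpNorm p y := by
  have hterm (k : Fin d) : 0 ≤ |y k| ^ p := by positivity
  rw [lpNorm, one_div, Real.le_rpow_inv_iff_of_pos (abs_nonneg _) (sum_nonneg fun k _ ↦ hterm k) hp]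
  exact single_le_sum (f := fun k ↦ |y k| ^ p) (fun k _ ↦ hterm k) (mem_univ j)

lemma lpNorm_le_of_forall_abs_le (hp : 0 < p) (h : ∀ j, |y j| ≤ r) :
    lpNorm p y ≤ (d : ℝ) ^ (1 / p) * r := by
  rcases d.eq_zero_or_pos with rfl | hd
  · simp [lpNorm, hp.ne']
  have hr : 0 ≤ r := (abs_nonneg _).trans (h ⟨0, hd⟩)
  calc lpNorm p y ≤ (∑ _j : Fin d, r ^ p) ^ (1 / p) := by
        unfold lpNorm
        gcongr with j
        exact h j
    _ = (d * r ^ p) ^ (1 / p) := by simp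
    _ = (d : ℝ) ^ (1 / p) * r := by
        rw [Real.mul_rpow d.cast_nonneg (by positivity), one_div, Real.rpow_rpow_inv hr hp.ne']

end lpNorm

lemma inter_nonempty_of_sum_lt_sum_add_sum {ι M : Type*} [DecidableEq ι] [AddCommMonoid M]
    [PartialOrder M] [IsOrderedAddMonoid M] {w : ι → M} {s t u : Finset ι} (hs : s ⊆ u)
    (ht : t ⊆ u) (hw : ∀ i ∈ u, 0 ≤ w i) (h : ∑ i ∈ u, w i < ∑ i ∈ s, w i + ∑ i ∈ t, w i) :
    (s ∩ t).Nonempty := by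
  contrapose! h
  rw [← sum_union (disjoint_iff_inter_eq_empty.mpr h)]
  exact not_lt_of_ge <|
    sum_le_sum_of_subset_of_nonneg (union_subset hs ht) fun i hi _ ↦ hw i hi

section WeightedMedian

variable {ι K β : Type*} [Fintype ι] [Field K] [LinearOrder K] [IsStrictOrderedRing K]
  [Preorder β] [DecidableLE β]

/-- `x` is a weighted median of the family `f` with weights `w`: each of the order intervals
`(-∞, x]` and `[x, ∞)` carries at least half of the total weight. A coordinatewise weighted median
of points `a i` is a point `x` such that `IsWeightedMedian w (fun i ↦ a i j) (x j)` for all `j`. -/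
def IsWeightedMedian (w : ι → K) (f : ι → β) (x : β) : Prop :=
  (∑ i, w i) / 2 ≤ ∑ i with f i ≤ x, w i ∧ (∑ i, w i) / 2 ≤ ∑ i with x ≤ f i, w i

lemma IsWeightedMedian.mem_of_ordConnected {w : ι → K} {f : ι → β} {x : β}
    (hx : IsWeightedMedian w f x) (hw : ∀ i, 0 ≤ w i) {s : Set β} (hs : s.OrdConnected)
    {t : Finset ι} (hts : ∀ i ∈ t, f i ∈ s) (ht : (∑ i, w i) / 2 < ∑ i ∈ t, w i) : x ∈ s := by
  classical
  have meets (v : Finset ι) (hv : (∑ i, w i) / 2 ≤ ∑ i ∈ v, w i) : (t ∩ v).Nonempty :=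
    inter_nonempty_of_sum_lt_sum_add_sum (subset_univ t) (subset_univ v) (fun i _ ↦ hw i)
      (by linarith)
  obtain ⟨i, hi⟩ := meets _ hx.1
  obtain ⟨k, hk⟩ := meets _ hx.2
  simp only [mem_inter, mem_filter_univ] at hi hk
  exact hs.out (hts i hi.1) (hts k hk.1) ⟨hi.2, hk.2⟩

end WeightedMedian

lemma abs_sub_le_of_isWeightedMedian {ι : Type*} [Fintype ι] {d : ℕ} {p : ℝ} (hp : 0 < p)
    {a : ι → Fin d → ℝ} {w : ι → ℝ} (hw : ∀ i, 0 ≤ w i) {q : Fin d → ℝ} {r : ℝ}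
    (hball : (∑ i, w i) / 2 < ∑ i with lpNorm p (fun j ↦ a i j - q j) ≤ r, w i)
    {j : Fin d} {m : ℝ} (hm : IsWeightedMedian w (fun i ↦ a i j) m) : |m - q j| ≤ r := by
  rw [abs_sub_comm, Set.mem_Icc_iff_abs_le]
  refine hm.mem_of_ordConnected hw Set.ordConnected_Icc (fun i hi ↦ ?_) hball
  rw [← Set.mem_Icc_iff_abs_le, abs_sub_comm]
  exact (abs_apply_le_lpNorm hp _ j).trans ((mem_filter_univ i).mp hi)

theorem stmt1_general {ι : Type*} [Fintype ι] {d : ℕ} {p : ℝ} (hp : 0 < p)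
    {a : ι → Fin d → ℝ} {w : ι → ℝ} (hw : ∀ i, 0 ≤ w i) {q : Fin d → ℝ} {r : ℝ}
    (hball : (∑ i, w i) / 2 < ∑ i with lpNorm p (fun j ↦ a i j - q j) ≤ r, w i)
    {x : Fin d → ℝ} (hmed : ∀ j, IsWeightedMedian w (fun i ↦ a i j) (x j)) :
    (∀ j, |x j - q j| ≤ r) ∧ lpNorm p (fun j ↦ x j - q j) ≤ (d : ℝ) ^ (1 / p) * r := by
  have hcoord (j : Fin d) : |x j - q j| ≤ r := abs_sub_le_of_isWeightedMedian hp hw hball (hmed j)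
  exact ⟨hcoord, lpNorm_le_of_forall_abs_le hp hcoord⟩

theorem stmt1 {n d : ℕ} (hn : 0 < n) (hd : 0 < d) (p : ℝ) (hp : 1 ≤ p)
    (a : Fin n → Fin d → ℝ) (w : Fin n → ℝ) (hw : ∀ i, 0 ≤ w i)
    (W : ℝ) (hW : W = ∑ i, w i) (hWpos : 0 < W)
    (α : ℝ) (hα : 1 / 2 < α) (hα1 : α ≤ 1)
    (q : Fin d → ℝ) (r : ℝ) (hr : 0 ≤ r)
    (hball : α * W ≤
      ∑ i ∈ Finset.univ.filter (fun i => lpNorm p (fun j => a i j - q j) ≤ r), w i)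
    (x : Fin d → ℝ)
    (hmed : ∀ j : Fin d,
      W / 2 ≤ ∑ i ∈ Finset.univ.filter (fun i => a i j ≤ x j), w i ∧
      W / 2 ≤ ∑ i ∈ Finset.univ.filter (fun i => x j ≤ a i j), w i) :
    (∀ j : Fin d, |x j - q j| ≤ r) ∧
    lpNorm p (fun j => x j - q j) ≤ (d : ℝ) ^ (1 / p) * r := by
  subst hW
  exact stmt1_general (by linarith) hw (by linarith [mul_lt_mul_of_pos_right hα hWpos]) hmed
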